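/- (Theorem 4.11.) γ is a slant helix if and only if σ is a constant function; that is, there exist a unit vector v ∈ ℝ³ and a constant c with ⟪n(s), v⟫ = c for all s if and only if there exists a constant c' with σ(s) = (κ(s)²/(κ(s)² + τ(s)²)^{3/2})·(τ/κ)'(s) = c' for all s. -/

import Mathlib

/-!
With `T = ⟪t, v⟫`, `B = ⟪b, v⟫` and `G = √(1 + f²)`, the function `σ` is characterised by
`f' = σ κ G³` (`deriv_ratio_eq`). The argument rests on the Frenet equations (`frenet_equations`).

If `⟪n, v⟫ = c` for a unit vector `v`, differentiating gives `T = f B`, so `(B G)² = T² + B² = 1 - c²`.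
Since `T' = κ c` and `B' = -τ c`, differentiating `T = f B` gives `f' B = c κ G²`, that is
`σ (B G) = c`. The number `1 - c²` is nonzero, as otherwise `T = 0`, hence `κ c = 0` and `c = 0`.
Since `(B G)²` is a nonzero constant, `(B G)' = 0`; so `B G` is constant, and so is `σ`.

Conversely, if `σ = c'`, the vector field `G⁻¹ (f t + b) + c' n` has zero derivative, so it is a
fixed vector; its norm is `√(1 + c'²)` and its inner product with `n` is `c'`. Normalise it.
-/

open scoped RealInnerProductSpace Topology

/-- The cross product on `ℝ³` (as `EuclideanSpace ℝ (Fin 3)`). -/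
noncomputable def cross3 (u v : EuclideanSpace ℝ (Fin 3)) : EuclideanSpace ℝ (Fin 3) :=
  (WithLp.equiv 2 (Fin 3 → ℝ)).symm
    ![u 1 * v 2 - u 2 * v 1, u 2 * v 0 - u 0 * v 2, u 0 * v 1 - u 1 * v 0]

lemma inner_eq_sum3 (u v : EuclideanSpace ℝ (Fin 3)) :
    ⟪u, v⟫ = u 0 * v 0 + u 1 * v 1 + u 2 * v 2 := by
  simp [PiLp.inner_apply, Fin.sum_univ_three, mul_comm]

@[simp] lemma cross3_zero (u v : EuclideanSpace ℝ (Fin 3)) :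
    cross3 u v 0 = u 1 * v 2 - u 2 * v 1 := rfl

@[simp] lemma cross3_one (u v : EuclideanSpace ℝ (Fin 3)) :
    cross3 u v 1 = u 2 * v 0 - u 0 * v 2 := rfl

@[simp] lemma cross3_two (u v : EuclideanSpace ℝ (Fin 3)) :
    cross3 u v 2 = u 0 * v 1 - u 1 * v 0 := rfl

lemma inner_left_cross3 (u v : EuclideanSpace ℝ (Fin 3)) : ⟪u, cross3 u v⟫ = 0 := by
  simp only [inner_eq_sum3, cross3_zero, cross3_one, cross3_two]; ring

lemma inner_right_cross3 (u v : EuclideanSpace ℝ (Fin 3)) : ⟪v, cross3 u v⟫ = 0 := by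
  simp only [inner_eq_sum3, cross3_zero, cross3_one, cross3_two]; ring

lemma inner_cross3_self (u v : EuclideanSpace ℝ (Fin 3)) :
    ⟪cross3 u v, cross3 u v⟫ = ⟪u, u⟫ * ⟪v, v⟫ - ⟪u, v⟫ ^ 2 := by
  simp only [inner_eq_sum3, cross3_zero, cross3_one, cross3_two]; ring

lemma cross3_cross3 (y u v : EuclideanSpace ℝ (Fin 3)) :
    cross3 y (cross3 u v) = ⟪y, v⟫ • u - ⟪y, u⟫ • v := by
  ext i
  fin_cases i <;> simp [inner_eq_sum3] <;> ring

lemma contDiff_cross3 {u v : ℝ → EuclideanSpace ℝ (Fin 3)} {k : WithTop ℕ∞}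
    (hu : ContDiff ℝ k u) (hv : ContDiff ℝ k v) :
    ContDiff ℝ k fun s => cross3 (u s) (v s) := by
  rw [contDiff_euclidean] at hu hv ⊢
  have a0 := hu 0
  have a1 := hu 1
  have a2 := hu 2
  have b0 := hv 0
  have b1 := hv 1
  have b2 := hv 2
  intro i
  fin_cases i
  · exact (a1.mul b2).sub (a2.mul b1)
  · exact (a2.mul b0).sub (a0.mul b2)
  · exact (a0.mul b1).sub (a1.mul b0)

/-- An orthonormal pair `u, v` together with `u × v` spans `ℝ³`. -/
lemma frame_expansion {u v : EuclideanSpace ℝ (Fin 3)} (huu : ⟪u, u⟫ = 1) (hvv : ⟪v, v⟫ = 1)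
    (huv : ⟪u, v⟫ = 0) (x : EuclideanSpace ℝ (Fin 3)) :
    x = ⟪x, u⟫ • u + ⟪x, v⟫ • v + ⟪x, cross3 u v⟫ • cross3 u v := by
  have hw : ⟪cross3 u v, cross3 u v⟫ = 1 := by rw [inner_cross3_self, huu, hvv, huv]; norm_num
  have huw := inner_left_cross3 u v
  have hvw := inner_right_cross3 u v
  have hvu : ⟪v, u⟫ = 0 := by rw [real_inner_comm, huv]
  have hwu : ⟪cross3 u v, u⟫ = 0 := by rw [real_inner_comm, huw]
  have hwv : ⟪cross3 u v, v⟫ = 0 := by rw [real_inner_comm, hvw]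
  rw [← sub_eq_zero]
  set y := x - (⟪x, u⟫ • u + ⟪x, v⟫ • v + ⟪x, cross3 u v⟫ • cross3 u v) with hy
  have hyu : ⟪y, u⟫ = 0 := by
    simp only [hy, inner_sub_left, inner_add_left, real_inner_smul_left,
      huu, hvu, hwu]
    ring
  have hyv : ⟪y, v⟫ = 0 := by
    simp only [hy, inner_sub_left, inner_add_left, real_inner_smul_left,
      hvv, huv, hwv]
    ring
  have hyw : ⟪y, cross3 u v⟫ = 0 := by
    simp only [hy, inner_sub_left, inner_add_left, real_inner_smul_left,
      hw, huw, hvw]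
    ring
  -- `y × (u × v)` vanishes, so Lagrange's identity forces `‖y‖² = 0`.
  have hc : cross3 y (cross3 u v) = 0 := by rw [cross3_cross3, hyu, hyv]; simp
  have := inner_cross3_self y (cross3 u v)
  rw [hc, hw, hyw] at this
  apply inner_self_eq_zero (𝕜 := ℝ).1
  simpa using this.symm

/-- If `⟪u, v⟫` is constant, then `⟪u', v⟫ = -⟪u, v'⟫`. -/
lemma inner_deriv_of_const {u v : ℝ → EuclideanSpace ℝ (Fin 3)} (hu : Differentiable ℝ u)
    (hv : Differentiable ℝ v) {c : ℝ} (h : ∀ s, ⟪u s, v s⟫ = c) (s : ℝ) :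
    ⟪deriv u s, v s⟫ = -⟪u s, deriv v s⟫ := by
  have h1 := (hu s).hasDerivAt.inner ℝ (hv s).hasDerivAt
  have h2 : (fun s => ⟪u s, v s⟫) = fun _ => c := funext h
  rw [h2] at h1
  have := h1.unique (hasDerivAt_const s c)
  linarith

/-- The Frenet equations `t' = κ n`, `n' = -κ t + τ b`, `b' = -τ n`, together with the
orthonormality of the frame and the differentiability of `τ / κ`. -/
lemma frenet_equations (γ : ℝ → EuclideanSpace ℝ (Fin 3)) (hγ : ContDiff ℝ (⊤ : ℕ∞) γ)
    (t n b : ℝ → EuclideanSpace ℝ (Fin 3)) (κ τ : ℝ → ℝ)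
    (ht : t = deriv γ) (hunit : ∀ s, ‖t s‖ = 1) (hκ : κ = fun s => ‖deriv t s‖)
    (hκpos : ∀ s, 0 < κ s) (hn : n = fun s => (κ s)⁻¹ • deriv t s)
    (hb : b = fun s => cross3 (t s) (n s)) (hτ : τ = fun s => ⟪deriv n s, b s⟫) :
    (∀ s, HasDerivAt t (κ s • n s) s) ∧
    (∀ s, HasDerivAt n (-κ s • t s + τ s • b s) s) ∧
    (∀ s, HasDerivAt b (-τ s • n s) s) ∧
    (∀ s, ⟪t s, t s⟫ = 1 ∧ ⟪n s, n s⟫ = 1 ∧ ⟪b s, b s⟫ = 1 ∧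
      ⟪t s, n s⟫ = 0 ∧ ⟪t s, b s⟫ = 0 ∧ ⟪n s, b s⟫ = 0) ∧
    Differentiable ℝ fun s => τ s / κ s := by
  have smooth_deriv : ∀ u : ℝ → EuclideanSpace ℝ (Fin 3), ContDiff ℝ (⊤ : ℕ∞) u →
      ContDiff ℝ (⊤ : ℕ∞) (deriv u) := fun u hu => (contDiff_infty_iff_deriv.1 hu).2
  have ct : ContDiff ℝ (⊤ : ℕ∞) t := ht ▸ smooth_deriv γ hγ
  have ct' := smooth_deriv t ct
  have ht' : ∀ s, deriv t s ≠ 0 := fun s h => by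
    have := hκpos s
    rw [hκ] at this
    simp [h] at this
  have cκ : ContDiff ℝ (⊤ : ℕ∞) κ := hκ ▸ ct'.norm ℝ ht'
  have cn : ContDiff ℝ (⊤ : ℕ∞) n := hn ▸ (cκ.inv fun s => (hκpos s).ne').smul ct'
  have cb : ContDiff ℝ (⊤ : ℕ∞) b := hb ▸ contDiff_cross3 ct cn
  have cτ : ContDiff ℝ (⊤ : ℕ∞) τ := hτ ▸ (smooth_deriv n cn).inner ℝ cb
  have hne : ((⊤ : ℕ∞) : WithTop ℕ∞) ≠ 0 := by simp
  have dt := ct.differentiable hne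
  have dn := cn.differentiable hne
  have db := cb.differentiable hne
  have et : ∀ s, deriv t s = κ s • n s := fun s => by
    rw [hn]; simp [smul_smul, (hκpos s).ne']
  have tt : ∀ s, ⟪t s, t s⟫ = 1 := fun s => by
    rw [real_inner_self_eq_norm_sq, hunit]; norm_num
  have nn : ∀ s, ⟪n s, n s⟫ = 1 := fun s => by
    have h : ‖deriv t s‖ = κ s := by rw [hκ]
    have := (hκpos s).ne'
    rw [real_inner_self_eq_norm_sq, hn]
    simp only [norm_smul, norm_inv, Real.norm_eq_abs, abs_of_pos (hκpos s), h]
    field_simp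
  have tn : ∀ s, ⟪t s, n s⟫ = 0 := fun s => by
    have h := inner_deriv_of_const dt dt tt s
    rw [et, real_inner_smul_left, real_inner_smul_right, real_inner_comm] at h
    have : κ s * ⟪t s, n s⟫ = 0 := by linarith
    exact (mul_eq_zero.1 this).resolve_left (hκpos s).ne'
  have tb : ∀ s, ⟪t s, b s⟫ = 0 := fun s => by rw [hb]; exact inner_left_cross3 _ _
  have nb : ∀ s, ⟪n s, b s⟫ = 0 := fun s => by rw [hb]; exact inner_right_cross3 _ _
  have bb : ∀ s, ⟪b s, b s⟫ = 1 := fun s => by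
    rw [hb]
    simp only [inner_cross3_self, tt, nn, tn]; norm_num
  have expand : ∀ s x, x = ⟪x, t s⟫ • t s + ⟪x, n s⟫ • n s + ⟪x, b s⟫ • b s := fun s x => by
    have := frame_expansion (tt s) (nn s) (tn s) x
    rwa [hb]
  have self_zero : ∀ u : ℝ → EuclideanSpace ℝ (Fin 3), Differentiable ℝ u →
      (∀ s, ⟪u s, u s⟫ = 1) → ∀ s, ⟪deriv u s, u s⟫ = 0 := fun u du hu s => by
    have := inner_deriv_of_const du du hu s
    rw [real_inner_comm (deriv u s) (u s)] at this
    linarith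
  have en : ∀ s, deriv n s = -κ s • t s + τ s • b s := fun s => by
    have h1 : ⟪deriv n s, t s⟫ = -κ s := by
      rw [inner_deriv_of_const dn dt (c := 0) (fun s => by rw [real_inner_comm, tn]) s, et,
        real_inner_smul_right, nn, mul_one]
    have h3 : ⟪deriv n s, b s⟫ = τ s := by rw [hτ]
    have := expand s (deriv n s)
    rw [h1, self_zero n dn nn, h3] at this
    simpa using this
  have eb : ∀ s, deriv b s = -τ s • n s := fun s => by
    have h1 : ⟪deriv b s, t s⟫ = 0 := by
      rw [inner_deriv_of_const db dt (c := 0) (fun s => by rw [real_inner_comm, tb]) s, et,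
        real_inner_smul_right, real_inner_comm, nb]
      simp
    have h2 : ⟪deriv b s, n s⟫ = -τ s := by
      rw [inner_deriv_of_const db dn (c := 0) (fun s => by rw [real_inner_comm, nb]) s,
        real_inner_comm, hτ]
    have := expand s (deriv b s)
    rw [h1, h2, self_zero b db bb] at this
    simpa using this
  exact ⟨fun s => et s ▸ (dt s).hasDerivAt, fun s => en s ▸ (dn s).hasDerivAt,
    fun s => eb s ▸ (db s).hasDerivAt,
    fun s => ⟨tt s, nn s, bb s, tn s, tb s, nb s⟩,
    (cτ.div cκ fun s => (hκpos s).ne').differentiable hne⟩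

/-- The defining formula of `σ` solved for `f'` (here `d`): `f' = σ κ √(1 + f²)³`. -/
lemma deriv_ratio_eq {κ τ d : ℝ} (hκ : 0 < κ) :
    d = (κ ^ 2 / (κ ^ 2 + τ ^ 2) ^ ((3 : ℝ) / 2) * d) * κ * √(1 + (τ / κ) ^ 2) ^ 3 := by
  have h1 : κ ^ 2 + τ ^ 2 = κ ^ 2 * (1 + (τ / κ) ^ 2) := by field_simp
  have hG : 0 < √(1 + (τ / κ) ^ 2) := Real.sqrt_pos.2 (by positivity)
  have h2 : (κ ^ 2 + τ ^ 2) ^ ((3 : ℝ) / 2) = (κ * √(1 + (τ / κ) ^ 2)) ^ 3 := by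
    have h3 : √(κ ^ 2 + τ ^ 2) = κ * √(1 + (τ / κ) ^ 2) := by
      rw [h1, Real.sqrt_mul (by positivity), Real.sqrt_sq hκ.le]
    rw [← h3, Real.sqrt_eq_rpow, ← Real.rpow_mul_natCast (by positivity)]
    norm_num
  rw [h2]
  field_simp

/-- Theorem 4.11 (classical form): `γ` is a slant helix (its principal normal makes a
constant angle with a fixed unit vector) iff
`σ = (κ²/(κ²+τ²)^{3/2})·(τ/κ)'` is constant. -/
theorem slant_helix_characterization
    (γ : ℝ → EuclideanSpace ℝ (Fin 3))
    (hγ : ContDiff ℝ (⊤ : ℕ∞) γ)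
    (t n b : ℝ → EuclideanSpace ℝ (Fin 3)) (κ τ : ℝ → ℝ)
    (ht : t = deriv γ)
    (hunit : ∀ s, ‖t s‖ = 1)
    (hκ : κ = fun s => ‖deriv t s‖)
    (hκpos : ∀ s, 0 < κ s)
    (hn : n = fun s => (κ s)⁻¹ • deriv t s)
    (hb : b = fun s => cross3 (t s) (n s))
    (hτ : τ = fun s => ⟪deriv n s, b s⟫)
    (f : ℝ → ℝ) (hf : f = fun s => τ s / κ s)
    (σ : ℝ → ℝ)
    (hσ : σ = fun s => κ s ^ 2 / (κ s ^ 2 + τ s ^ 2) ^ ((3 : ℝ) / 2) * deriv f s)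
    :
    (∃ (v : EuclideanSpace ℝ (Fin 3)) (c : ℝ), ‖v‖ = 1 ∧ ∀ s : ℝ, ⟪n s, v⟫ = c) ↔
      ∃ c' : ℝ, ∀ s : ℝ, σ s = c' := by
  obtain ⟨Dt, Dn, Db, orth, Df⟩ :=
    frenet_equations γ hγ t n b κ τ ht hunit hκ hκpos hn hb hτ
  rw [← hf] at Df
  have hf' : ∀ s, deriv f s = σ s * κ s * √(1 + f s ^ 2) ^ 3 := fun s => by
    rw [hσ]
    have := deriv_ratio_eq (τ := τ s) (d := deriv f s) (hκpos s)
    have e : f s = τ s / κ s := by rw [hf]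
    rwa [← e] at this
  have hτf : ∀ s, τ s = f s * κ s := fun s => by
    rw [hf]; exact (div_mul_cancel₀ _ (hκpos s).ne').symm
  have G2 : ∀ s, √(1 + f s ^ 2) ^ 2 = 1 + f s ^ 2 := fun s => Real.sq_sqrt (by positivity)
  have Gpos : ∀ s, 0 < √(1 + f s ^ 2) := fun s => Real.sqrt_pos.2 (by positivity)
  constructor
  · rintro ⟨v, c, hv, hc⟩
    have DT : ∀ s, HasDerivAt (fun s => ⟪t s, v⟫) (κ s * c) s := fun s => by
      have := (Dt s).inner ℝ (hasDerivAt_const s v)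
      simpa [real_inner_smul_left, hc] using this
    have DB : ∀ s, HasDerivAt (fun s => ⟪b s, v⟫) (-τ s * c) s := fun s => by
      have := (Db s).inner ℝ (hasDerivAt_const s v)
      simpa [real_inner_smul_left, hc] using this
    have TB : ∀ s, ⟪t s, v⟫ = f s * ⟪b s, v⟫ := fun s => by
      have h1 := (Dn s).inner ℝ (hasDerivAt_const s v)
      rw [show (fun s => ⟪n s, v⟫) = fun _ => c from funext hc] at h1
      have h2 := h1.unique (hasDerivAt_const s c)
      rw [inner_zero_right, zero_add, inner_add_left, real_inner_smul_left,
        real_inner_smul_left, hτf] at h2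
      apply mul_left_cancel₀ (hκpos s).ne'
      linarith
    have hsum : ∀ s, ⟪t s, v⟫ ^ 2 + c ^ 2 + ⟪b s, v⟫ ^ 2 = 1 := fun s => by
      obtain ⟨tt, nn, -, tn, -, -⟩ := orth s
      have h1 := frame_expansion tt nn tn v
      have e : b s = cross3 (t s) (n s) := by rw [hb]
      rw [← e] at h1
      have h2 : ⟪v, v⟫ = 1 := by rw [real_inner_self_eq_norm_sq, hv]; norm_num
      nth_rewrite 1 [h1] at h2
      simp only [inner_add_left, real_inner_smul_left, real_inner_comm _ v, hc] at h2
      rw [← h2]; ring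
    have hcne : 1 - c ^ 2 ≠ 0 := fun h => by
      have T0 : (fun s => ⟪t s, v⟫) = fun _ => 0 := funext fun s => by
        have := hsum s
        nlinarith [sq_nonneg ⟪t s, v⟫, sq_nonneg ⟪b s, v⟫]
      have h1 := DT 0
      rw [T0] at h1
      have h2 := h1.unique (hasDerivAt_const (0 : ℝ) (0 : ℝ))
      rcases mul_eq_zero.1 h2 with h3 | h3
      · exact (hκpos 0).ne' h3
      · simp [h3] at h
    have hW2 : ∀ s, (⟪b s, v⟫ * √(1 + f s ^ 2)) ^ 2 = 1 - c ^ 2 := fun s => by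
      have := hsum s
      rw [TB] at this
      rw [mul_pow, G2]
      linarith
    have hWne : ∀ s, ⟪b s, v⟫ * √(1 + f s ^ 2) ≠ 0 := fun s h => by
      have := hW2 s
      rw [h] at this
      exact hcne (by simpa using this.symm)
    have hW : ∀ s, ⟪b s, v⟫ * √(1 + f s ^ 2) = ⟪b 0, v⟫ * √(1 + f 0 ^ 2) := by
      have dW : Differentiable ℝ fun s => ⟪b s, v⟫ * √(1 + f s ^ 2) :=
        Differentiable.mul (fun s => (DB s).differentiableAt)
          (((Df.pow 2).const_add 1).sqrt fun s => (add_pos_of_pos_of_nonneg one_pos (sq_nonneg (f s))).ne')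
      refine fun s => is_const_of_deriv_eq_zero dW (fun s => ?_) s 0
      have h1 := (dW s).hasDerivAt.pow 2
      rw [show (fun s => ⟪b s, v⟫ * √(1 + f s ^ 2)) ^ 2 = fun _ => 1 - c ^ 2 from
        funext hW2] at h1
      have h2 := h1.unique (hasDerivAt_const s _)
      simpa [hWne s, (Gpos s).ne', left_ne_zero_of_mul (hWne s)] using h2
    have hσW : ∀ s, σ s * (⟪b s, v⟫ * √(1 + f s ^ 2)) = c := fun s => by
      have h1 := (Df s).hasDerivAt.mul (DB s)
      have h2 := DT s
      rw [show (fun s => ⟪t s, v⟫) = f * fun s => ⟪b s, v⟫ from funext TB] at h2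
      have h3 := h1.unique h2
      rw [hf', hτf] at h3
      have hG := G2 s
      have hne : κ s * √(1 + f s ^ 2) ^ 2 ≠ 0 :=
        mul_ne_zero (hκpos s).ne' (pow_ne_zero _ (Gpos s).ne')
      apply mul_left_cancel₀ hne
      linear_combination h3 - c * κ s * hG
    refine ⟨c / (⟪b 0, v⟫ * √(1 + f 0 ^ 2)), fun s => ?_⟩
    rw [eq_div_iff (hWne 0), ← hW s, hσW]
  · rintro ⟨c, hc⟩
    set D : ℝ → EuclideanSpace ℝ (Fin 3) :=
      fun s => (√(1 + f s ^ 2))⁻¹ • (f s • t s + b s) + c • n s with hD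
    have hD0 : ∀ s, HasDerivAt D 0 s := fun s => by
      have hG := G2 s
      have hGp := (Gpos s).ne'
      have hs := ((((Df s).hasDerivAt.pow 2).const_add 1).sqrt
        (add_pos_of_pos_of_nonneg one_pos (sq_nonneg (f s))).ne').inv hGp
      have h1 := (hs.smul (((Df s).hasDerivAt.smul (Dt s)).add (Db s))).add ((Dn s).const_smul c)
      refine h1.congr_deriv ?_
      simp only [Pi.add_apply, Pi.smul_apply', Pi.inv_apply, Pi.pow_apply]
      rw [hf', hc, hτf]
      generalize √(1 + f s ^ 2) = G at *
      match_scalars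
      all_goals field_simp
      all_goals first | ring1 | linear_combination c * κ s * hG
    have hconst : ∀ s, D s = D 0 := fun s =>
      is_const_of_deriv_eq_zero (fun s => (hD0 s).differentiableAt) (fun s => (hD0 s).deriv) s 0
    have hnD : ∀ s, ⟪n s, D 0⟫ = c := fun s => by
      obtain ⟨-, nn, -, tn, -, nb⟩ := orth s
      have nt : ⟪n s, t s⟫ = 0 := by rw [real_inner_comm, tn]
      rw [← hconst s, hD]
      simp only [inner_add_right, real_inner_smul_right, nn, nt, nb]
      ring
    have hDD : ⟪D 0, D 0⟫ = 1 + c ^ 2 := by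
      obtain ⟨tt, nn, bb, tn, tb, nb⟩ := orth 0
      have nt : ⟪n 0, t 0⟫ = 0 := by rw [real_inner_comm, tn]
      have bt : ⟪b 0, t 0⟫ = 0 := by rw [real_inner_comm, tb]
      have bn : ⟪b 0, n 0⟫ = 0 := by rw [real_inner_comm, nb]
      have hG := G2 0
      have hGp := (Gpos 0).ne'
      simp only [hD, inner_add_right, inner_add_left, real_inner_smul_right,
        real_inner_smul_left, tt, nn, bb, tn, tb, nb, nt, bt, bn]
      generalize √(1 + f 0 ^ 2) = G at *
      field_simp
      linear_combination -hG
    have hpos : 0 < ‖D 0‖ := by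
      rw [real_inner_self_eq_norm_sq] at hDD
      exact (sq_pos_iff.1 (hDD ▸ by positivity)).lt_of_le' (norm_nonneg _)
    refine ⟨‖D 0‖⁻¹ • D 0, ‖D 0‖⁻¹ * c, ?_, fun s => ?_⟩
    · rw [norm_smul, norm_inv, norm_norm, inv_mul_cancel₀ hpos.ne']
    · rw [real_inner_smul_right, hnD]
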